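/- arXiv:2407.20226 — 2 statements merged into one kernel-verified Lean document; each statement's English description precedes it below -/
import Mathlib

section
/- Let G be a finite connected simple graph containing the three edges e_{12}, e_{23}, e_{13} of a triangle on vertices v_1, v_2, v_3. Suppose T_1, T_2, T_3 are pairwise vertex-disjoint subtrees of G whose vertex sets partition V(G), with v_i a vertex of T_i for i = 1, 2, 3, and such that S = T_1 ∪ T_2 ∪ T_3 ∪ {e_{12}, e_{23}} and S' = T_1 ∪ T_2 ∪ T_3 ∪ {e_{13}, e_{23}} are spanning trees of G. Assume further that G contains at least one edge other than e_{12} with one endpoint in T_1 and the other in T_2, and that e_{13} is the only edge of G with one endpoint in T_1 and the other in T_3. Then P_MST(S;G) > P_MST(S';G). -/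
open MeasureTheory SimpleGraph
open scoped Classical

noncomputable section

namespace RST

variable {V : Type*}

/-- The i.i.d. uniform-on-`[0,1]` product measure on weight vectors indexed by `E`. -/
def edgeUniform (E : Type*) [Fintype E] : Measure (E → ℝ) :=
  Measure.pi fun _ => (volume : Measure ℝ).restrict (Set.Icc (0 : ℝ) 1)

/-- The graph on `V` whose edge set is the finset `T`. -/
def spanGraph (T : Finset (Sym2 V)) : SimpleGraph V :=
  SimpleGraph.fromEdgeSet ↑T

/-- `T` is (the edge set of) a spanning tree of `G`. -/
def IsSpanningTree (G : SimpleGraph V) (T : Finset (Sym2 V)) : Prop :=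
  ↑T ⊆ G.edgeSet ∧ (spanGraph T).Connected ∧ (spanGraph T).IsAcyclic

/-- Total weight `∑_{e ∈ T} w e` of the tree `T`. -/
def treeWeight (G : SimpleGraph V) [Fintype V] (w : G.edgeSet → ℝ) (T : Finset (Sym2 V)) : ℝ :=
  ∑ e : G.edgeSet, if (e : Sym2 V) ∈ T then w e else 0

/-- The event that `T` is the unique minimum-weight spanning tree of `G`. -/
def mstEvent (G : SimpleGraph V) [Fintype V] (T : Finset (Sym2 V)) : Set (G.edgeSet → ℝ) :=
  {w | IsSpanningTree G T ∧ ∀ T' : Finset (Sym2 V), IsSpanningTree G T' → T' ≠ T →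
    treeWeight G w T < treeWeight G w T'}

/-- `P_MST(T; G)`: probability that `T` is the unique minimum-weight spanning tree. -/
def mstProb (G : SimpleGraph V) [Fintype V] (T : Finset (Sym2 V)) : ℝ :=
  (edgeUniform G.edgeSet (mstEvent G T)).toReal

/-! ### Spanning trees via connectedness and cardinality -/

lemma spanGraph_adj (T : Finset (Sym2 V)) (a b : V) :
    (spanGraph T).Adj a b ↔ s(a, b) ∈ T ∧ a ≠ b := by
  simp [spanGraph]

lemma reach_of_mem {T : Finset (Sym2 V)} {a b : V} (h : s(a, b) ∈ T) :
    (spanGraph T).Reachable a b := by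
  by_cases hab : a = b
  · subst hab; exact Reachable.refl _
  · exact ((spanGraph_adj T a b).2 ⟨h, hab⟩).reachable

lemma reach_mono {S T : Finset (Sym2 V)} (hST : S ⊆ T) {a b : V}
    (h : (spanGraph S).Reachable a b) : (spanGraph T).Reachable a b := by
  refine h.mono ?_
  intro x y hxy
  rw [spanGraph_adj] at *
  exact ⟨hST hxy.1, hxy.2⟩

lemma reach_trans_edges {S T : Finset (Sym2 V)}
    (h : ∀ a b, s(a, b) ∈ S → (spanGraph T).Reachable a b) {a b : V}
    (hab : (spanGraph S).Reachable a b) : (spanGraph T).Reachable a b := by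
  obtain ⟨p⟩ := hab
  induction p with
  | nil => exact Reachable.refl _
  | cons hadj p ih => exact (h _ _ ((spanGraph_adj _ _ _).1 hadj).1).trans ih

lemma conn_of_edges {S T : Finset (Sym2 V)} (hS : (spanGraph S).Connected)
    (h : ∀ a b, s(a, b) ∈ S → (spanGraph T).Reachable a b) : (spanGraph T).Connected := by
  have := hS.nonempty
  exact ⟨fun a b => reach_trans_edges h (hS.preconnected a b)⟩

lemma spanGraph_card {G : SimpleGraph V} {T : Finset (Sym2 V)} (h : ↑T ⊆ G.edgeSet) :
    Nat.card (spanGraph T).edgeSet = T.card := by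
  have : (spanGraph T).edgeSet = ↑T := by
    rw [spanGraph, edgeSet_fromEdgeSet]
    ext e
    simp only [Set.mem_sdiff, Finset.mem_coe, and_iff_left_iff_imp]
    intro he hd
    exact G.not_isDiag_of_mem_edgeSet (h he) hd
  rw [this]
  simp

lemma isST_iff [Fintype V] (G : SimpleGraph V) (T : Finset (Sym2 V)) :
    IsSpanningTree G T ↔ ↑T ⊆ G.edgeSet ∧ (spanGraph T).Connected ∧
      T.card + 1 = Nat.card V := by
  constructor
  · rintro ⟨h1, h2, h3⟩
    have := (isTree_iff_connected_and_card (G := spanGraph T)).1 ⟨h2, h3⟩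
    rw [spanGraph_card h1] at this
    exact ⟨h1, this⟩
  · rintro ⟨h1, h2, h3⟩
    have := (isTree_iff_connected_and_card (G := spanGraph T)).2
      ⟨h2, by rw [spanGraph_card h1]; exact h3⟩
    exact ⟨h1, h2, this.2⟩

lemma IsSpanningTree.not_conn_of_card_lt [Fintype V] {G : SimpleGraph V} {S T : Finset (Sym2 V)}
    (hS : IsSpanningTree G S) (hT : ↑T ⊆ G.edgeSet) (hc : T.card < S.card) :
    ¬ (spanGraph T).Connected := by
  intro h
  have h1 := h.card_vert_le_card_edgeSet_add_one
  rw [spanGraph_card hT] at h1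
  have := ((isST_iff G S).1 hS).2.2
  omega

lemma isST_of_edges [Fintype V] {G : SimpleGraph V} {S T : Finset (Sym2 V)}
    (hS : IsSpanningTree G S) (hT : ↑T ⊆ G.edgeSet) (hc : T.card = S.card)
    (h : ∀ a b, s(a, b) ∈ S → (spanGraph T).Reachable a b) : IsSpanningTree G T := by
  rw [isST_iff] at *
  exact ⟨hT, conn_of_edges hS.2.1 h, by rw [hc]; exact hS.2.2⟩

lemma exists_crossing {T : Finset (Sym2 V)} {a b : V} (h : (spanGraph T).Reachable a b)
    (A : Set V) (ha : a ∈ A) (hb : b ∉ A) : ∃ x y, s(x, y) ∈ T ∧ x ∈ A ∧ y ∉ A := by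
  obtain ⟨p⟩ := h
  obtain ⟨d, -, h1, h2⟩ := p.exists_boundary_dart A ha hb
  exact ⟨d.fst, d.snd, ((spanGraph_adj _ _ _).1 d.adj).1, h1, h2⟩

/-- Symmetric exchange for spanning trees. -/
lemma exchange [Fintype V] {G : SimpleGraph V} {S T : Finset (Sym2 V)}
    (hS : IsSpanningTree G S) (hT : IsSpanningTree G T) {f : Sym2 V} (hfT : f ∈ T)
    (hfS : f ∉ S) : ∃ e ∈ S, e ∉ T ∧ IsSpanningTree G (insert f (S.erase e)) ∧
      IsSpanningTree G (insert e (T.erase f)) := by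
  induction f with
  | _ a b =>
  have hab : a ≠ b := by
    have : s(a, b) ∈ G.edgeSet := hT.1 hfT
    exact (G.mem_edgeSet.1 this).ne
  have hTf : ((T.erase s(a, b) : Finset (Sym2 V)) : Set (Sym2 V)) ⊆ G.edgeSet := by
    intro e he
    exact hT.1 (Finset.mem_of_mem_erase (Finset.mem_coe.1 he))
  -- a, b are separated in T - f
  have hsep : ¬ (spanGraph (T.erase s(a, b))).Reachable a b := by
    intro hr
    refine hT.not_conn_of_card_lt hTf (Finset.card_erase_lt_of_mem hfT) ?_
    refine conn_of_edges hT.2.1 ?_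
    intro x y hxy
    by_cases h : s(x, y) = s(a, b)
    · rcases Sym2.eq_iff.1 h with ⟨rfl, rfl⟩ | ⟨rfl, rfl⟩
      · exact hr
      · exact hr.symm
    · exact reach_of_mem (Finset.mem_erase.2 ⟨h, hxy⟩)
  have hdich : ∀ z, (spanGraph (T.erase s(a, b))).Reachable a z ∨
      (spanGraph (T.erase s(a, b))).Reachable b z := by
    intro z
    by_contra hz
    obtain ⟨x, y, hxy, hx, hy⟩ := exists_crossing (hT.2.1.preconnected a z)
      {z | (spanGraph (T.erase s(a, b))).Reachable a z ∨
        (spanGraph (T.erase s(a, b))).Reachable b z} (Or.inl (Reachable.refl _)) hz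
    apply hy
    by_cases h : s(x, y) = s(a, b)
    · rcases Sym2.eq_iff.1 h with ⟨rfl, rfl⟩ | ⟨rfl, rfl⟩
      · exact Or.inr (Reachable.refl _)
      · exact Or.inl (Reachable.refl _)
    · have := reach_of_mem (Finset.mem_erase.2 ⟨h, hxy⟩)
      rcases hx with hx | hx
      · exact Or.inl (hx.trans this)
      · exact Or.inr (hx.trans this)
  obtain ⟨p, hp⟩ := (hS.2.1.preconnected a b).exists_isPath
  obtain ⟨d, hd, hx, hy⟩ := p.exists_boundary_dart
    {z | (spanGraph (T.erase s(a, b))).Reachable a z} (Reachable.refl _) hsep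
  obtain ⟨⟨x, y⟩, hadj⟩ := d
  simp only [Set.mem_ofPred_eq] at hx hy
  have heS : s(x, y) ∈ S := ((spanGraph_adj _ _ _).1 hadj).1
  have hne : s(x, y) ≠ s(a, b) := by
    intro h; rw [h] at heS; exact hfS heS
  have heT : s(x, y) ∉ T := by
    intro h
    exact hy (hx.trans (reach_of_mem (Finset.mem_erase.2 ⟨hne, h⟩)))
  have hep : s(x, y) ∈ p.edges := List.mem_map.2 ⟨_, hd, rfl⟩
  have hcy : (spanGraph (insert s(a, b) (S.erase s(x, y)))).Reachable x y := by
    have hle : spanGraph S ≤ spanGraph (insert s(a, b) S) := by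
      intro u v huv
      rw [spanGraph_adj] at *
      exact ⟨Finset.mem_insert_of_mem huv.1, huv.2⟩
    have hba : (spanGraph (insert s(a, b) S)).Adj b a := by
      rw [spanGraph_adj]
      exact ⟨by rw [Sym2.eq_swap]; exact Finset.mem_insert_self _ _, hab.symm⟩
    have hc : (Walk.cons hba (p.mapLe hle)).IsCycle := by
      rw [Walk.cons_isCycle_iff]
      refine ⟨(Walk.isPath_mapLe hle).2 hp, ?_⟩
      rw [Walk.edges_mapLe_eq_edges]
      intro h
      have := p.edges_subset_edgeSet h
      rw [mem_edgeSet, spanGraph_adj, Sym2.eq_swap] at this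
      exact hfS this.1
    have hr := (adj_and_reachable_delete_edges_iff_exists_cycle (v := x) (w := y)).2
      ⟨b, _, hc, by
        rw [Walk.edges_cons, Walk.edges_mapLe_eq_edges]
        exact List.mem_cons_of_mem _ hep⟩
    refine hr.2.mono ?_
    intro u v huv
    rw [deleteEdges_adj, spanGraph_adj] at huv
    rw [spanGraph_adj]
    simp only [Finset.mem_insert, Finset.mem_erase, Set.mem_singleton_iff] at *
    tauto
  refine ⟨s(x, y), heS, heT, ?_, ?_⟩
  · refine isST_of_edges hS ?_ ?_ ?_
    · intro e he
      simp only [Finset.coe_insert, Finset.coe_erase, Set.mem_insert_iff, Set.mem_sdiff,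
        Finset.mem_coe] at he
      rcases he with rfl | he
      · exact hT.1 hfT
      · exact hS.1 he.1
    · rw [Finset.card_insert_of_notMem (by simp [hfS]), Finset.card_erase_add_one heS]
    · intro u v huv
      by_cases h : s(u, v) = s(x, y)
      · rcases Sym2.eq_iff.1 h with ⟨rfl, rfl⟩ | ⟨rfl, rfl⟩
        · exact hcy
        · exact hcy.symm
      · exact reach_of_mem (by simp [h, huv])
  · refine isST_of_edges hT ?_ ?_ ?_
    · intro e he
      simp only [Finset.coe_insert, Finset.coe_erase, Set.mem_insert_iff, Set.mem_sdiff,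
        Finset.mem_coe] at he
      rcases he with rfl | he
      · exact hS.1 heS
      · exact hT.1 he.1
    · rw [Finset.card_insert_of_notMem (by simp [heT]), Finset.card_erase_add_one hfT]
    · have hr : (spanGraph (insert s(x, y) (T.erase s(a, b)))).Reachable a b := by
        have h1 := reach_mono (Finset.subset_insert s(x, y) _) hx
        have h2 := reach_mono (Finset.subset_insert s(x, y) _) ((hdich y).resolve_left hy)
        exact h1.trans ((reach_of_mem (Finset.mem_insert_self _ _)).trans h2.symm)
      intro u v huv
      by_cases h : s(u, v) = s(a, b)
      · rcases Sym2.eq_iff.1 h with ⟨rfl, rfl⟩ | ⟨rfl, rfl⟩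
        · exact hr
        · exact hr.symm
      · exact reach_of_mem (by simp [h, huv])

/-! ### The local optimality criterion -/

/-- Extension of a weight vector by zero. -/
def ext0 (G : SimpleGraph V) (w : G.edgeSet → ℝ) (e : Sym2 V) : ℝ :=
  if h : e ∈ G.edgeSet then w ⟨e, h⟩ else 0

lemma treeWeight_eq [Fintype V] (G : SimpleGraph V) (w : G.edgeSet → ℝ) (T : Finset (Sym2 V)) 
    (hT : ↑T ⊆ G.edgeSet) : treeWeight G w T = ∑ e ∈ T, ext0 G w e := by
  rw [treeWeight, ← Finset.sum_filter]
  refine Finset.sum_bij (fun e _ => (e : Sym2 V)) ?_ ?_ ?_ ?_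
  · intro e he; exact (Finset.mem_filter.1 he).2
  · intro e _ e' _ h; exact Subtype.ext h
  · intro e he; exact ⟨⟨e, hT he⟩, by simpa using he, rfl⟩
  · intro e he; simp [ext0]

lemma treeWeight_exch [Fintype V] {G : SimpleGraph V} (w : G.edgeSet → ℝ) {T : Finset (Sym2 V)}
    {e f : Sym2 V} (hT : IsSpanningTree G T) (hT' : IsSpanningTree G (insert f (T.erase e)))
    (he : e ∈ T) (hf : f ∉ T) :
    treeWeight G w (insert f (T.erase e)) = treeWeight G w T - ext0 G w e + ext0 G w f := by
  rw [treeWeight_eq _ _ _ hT.1, treeWeight_eq _ _ _ hT'.1,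
    Finset.sum_insert (by simp [hf]), ← Finset.add_sum_erase T _ he]
  ring

lemma mst_of_local [Fintype V] {G : SimpleGraph V} (w : G.edgeSet → ℝ) {S : Finset (Sym2 V)}
    (hS : IsSpanningTree G S) (hloc : ∀ e ∈ S, ∀ f, f ∉ S →
      IsSpanningTree G (insert f (S.erase e)) → ext0 G w e < ext0 G w f) :
    w ∈ mstEvent G S := by
  refine ⟨hS, ?_⟩
  have key : ∀ n : ℕ, ∀ T, IsSpanningTree G T → (T \ S).card = n → T ≠ S →
      treeWeight G w S < treeWeight G w T := by
    intro n
    induction n with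
    | zero =>
      intro T hT hn hne
      exfalso
      have hsub : T ⊆ S := Finset.sdiff_eq_empty_iff_subset.1 (Finset.card_eq_zero.1 hn)
      have h1 := ((isST_iff G S).1 hS).2.2
      have h2 := ((isST_iff G T).1 hT).2.2
      exact hne (Finset.eq_of_subset_of_card_le hsub (by omega))
    | succ n ih =>
      intro T hT hn hne
      obtain ⟨f, hf⟩ := Finset.card_pos.1 (by omega : 0 < (T \ S).card)
      obtain ⟨hfT, hfS⟩ := Finset.mem_sdiff.1 hf
      obtain ⟨e, heS, heT, h1, h2⟩ := exchange hS hT hfT hfS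
      have hlt := hloc e heS f hfS h1
      have hw := treeWeight_exch w hT h2 hfT heT
      have hcard : (insert e (T.erase f) \ S).card = n := by
        have : insert e (T.erase f) \ S = (T \ S).erase f := by
          ext g
          simp only [Finset.mem_sdiff, Finset.mem_insert, Finset.mem_erase]
          constructor
          · rintro ⟨rfl | h, h'⟩
            · exact absurd heS h'
            · exact ⟨h.1, h.2, h'⟩
          · rintro ⟨h1, h2, h3⟩
            exact ⟨Or.inr ⟨h1, h2⟩, h3⟩
        rw [this, Finset.card_erase_of_mem hf, hn]; rfl
      by_cases hEq : insert e (T.erase f) = S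
      · rw [hEq] at hw; linarith
      · have := ih _ h2 hcard hEq
        linarith
  intro T hT hne
  exact key _ T hT rfl hne

lemma local_of_mst [Fintype V] {G : SimpleGraph V} {w : G.edgeSet → ℝ} {S : Finset (Sym2 V)}
    (hw : w ∈ mstEvent G S) {e f : Sym2 V} (he : e ∈ S) (hf : f ∉ S)
    (h : IsSpanningTree G (insert f (S.erase e))) : ext0 G w e < ext0 G w f := by
  have h1 := hw.2 _ h (by
    intro h'
    apply hf
    rw [← h']
    exact Finset.mem_insert_self _ _)
  rw [treeWeight_exch w hw.1 h he hf] at h1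
  linarith

/-! ### Measure part -/

lemma measure_lt {E : Type*} [Fintype E] (σ : Equiv.Perm E) (M M' : Set (E → ℝ)) (lo : E → ℝ)
    (hlo0 : ∀ e, 0 ≤ lo e) (hlo1 : ∀ e, lo e + 1 / 10 ≤ 1)
    (hsub : ∀ w ∈ M', (fun e => w (σ e)) ∈ M)
    (hbox : ∀ w : E → ℝ, (∀ e, lo e < w e ∧ w e < lo e + 1 / 10) →
      (fun e => w (σ e)) ∈ M ∧ w ∉ M') :
    (edgeUniform E M').toReal < (edgeUniform E M).toReal := by
  have : IsFiniteMeasure (edgeUniform E) := by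
    unfold edgeUniform; infer_instance
  have hmp : MeasurePreserving (MeasurableEquiv.piCongrLeft (fun _ : E => ℝ) σ.symm)
      (edgeUniform E) (edgeUniform E) :=
    measurePreserving_piCongrLeft
      (fun _ : E => (volume : Measure ℝ).restrict (Set.Icc (0 : ℝ) 1)) σ.symm
  have hφ : ∀ w : E → ℝ, MeasurableEquiv.piCongrLeft (fun _ : E => ℝ) σ.symm w =
      fun e => w (σ e) := by
    intro w
    funext e
    have := MeasurableEquiv.piCongrLeft_apply_apply (β := fun _ : E => ℝ) σ.symm w (σ e)
    simpa using this
  have hM := hmp.measure_preimage_equiv M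
  set B : Set (E → ℝ) := Set.univ.pi fun e => Set.Ioo (lo e) (lo e + 1 / 10) with hB
  have hBm : MeasurableSet B := MeasurableSet.univ_pi fun e => measurableSet_Ioo
  have hBpos : edgeUniform E B ≠ 0 := by
    rw [edgeUniform, hB, Measure.pi_pi]
    refine Finset.prod_ne_zero_iff.2 fun e _ => ?_
    rw [Measure.restrict_apply measurableSet_Ioo, Set.inter_eq_left.2, Real.volume_Ioo]
    · simp
    · intro x hx
      exact ⟨(hlo0 e).trans hx.1.le, hx.2.le.trans (hlo1 e)⟩
  have hBmem : ∀ w ∈ B, ∀ e, lo e < w e ∧ w e < lo e + 1 / 10 := by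
    intro w hw e
    exact hw e (Set.mem_univ e)
  have hdisj : Disjoint M' B := by
    rw [Set.disjoint_left]
    intro w hw hwB
    exact (hbox w (hBmem w hwB)).2 hw
  have hle : edgeUniform E (M' ∪ B) ≤ edgeUniform E M := by
    rw [← hM]
    refine measure_mono ?_
    rintro w (hw | hw)
    · simp only [Set.mem_preimage, hφ]
      exact hsub w hw
    · simp only [Set.mem_preimage, hφ]
      exact (hbox w (hBmem w hw)).1
  rw [measure_union hdisj hBm] at hle
  refine (ENNReal.toReal_lt_toReal (measure_ne_top _ _) (measure_ne_top _ _)).2 ?_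
  exact (ENNReal.lt_add_right (measure_ne_top _ _) hBpos).trans_le hle

lemma ext0_of_mem {G : SimpleGraph V} (w : G.edgeSet → ℝ) {e : Sym2 V} (h : e ∈ G.edgeSet) :
    ext0 G w e = w ⟨e, h⟩ := by
  simp [ext0, h]

lemma swap_snd {α : Type*} [DecidableEq α] (t : Finset α) (a b f : α) (hbt : b ∉ t)
    (hab : a ≠ b) : insert f ((t ∪ {a, b}).erase b) = t ∪ {a, f} := by
  ext g
  simp only [Finset.mem_insert, Finset.mem_erase, Finset.mem_union, Finset.mem_singleton]
  have h1 : g = b → g ∉ t := by rintro rfl; exact hbt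
  have h2 : g = a → g ≠ b := by rintro rfl; exact hab
  tauto

lemma swap_fst {α : Type*} [DecidableEq α] (t : Finset α) (a b f : α) (hat : a ∉ t)
    (hab : a ≠ b) : insert f ((t ∪ {a, b}).erase a) = t ∪ {f, b} := by
  rw [Finset.pair_comm, swap_snd t b a f hat hab.symm, Finset.pair_comm]

set_option maxHeartbeats 1600000 in
/-- Triangle-edge rotation: `G` contains a triangle `v1 v2 v3`, and `t1, t2, t3` are the
edge sets of pairwise vertex-disjoint subtrees, with respective vertex sets `A1, A2, A3`
partitioning `V`, containing `v1, v2, v3` respectively, such that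
`S = t1 ∪ t2 ∪ t3 ∪ {e12, e23}` and `S' = t1 ∪ t2 ∪ t3 ∪ {e13, e23}` are spanning trees.
If `G` has at least one edge other than `e12` between `A1` and `A2`, and no edge other
than `e13` between `A1` and `A3`, then `P_MST(S; G) > P_MST(S'; G)`. -/
theorem triangle_edge_rotation [Fintype V] (G : SimpleGraph V) (hG : G.Connected)
    (v1 v2 v3 : V) (h12 : G.Adj v1 v2) (h23 : G.Adj v2 v3) (h13 : G.Adj v1 v3)
    (A1 A2 A3 : Set V) (hv1 : v1 ∈ A1) (hv2 : v2 ∈ A2) (hv3 : v3 ∈ A3)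
    (hd12 : Disjoint A1 A2) (hd13 : Disjoint A1 A3) (hd23 : Disjoint A2 A3)
    (hcov : A1 ∪ A2 ∪ A3 = Set.univ)
    (t1 t2 t3 : Finset (Sym2 V))
    (ht1e : ∀ e ∈ t1, ∀ x : V, x ∈ e → x ∈ A1)
    (ht2e : ∀ e ∈ t2, ∀ x : V, x ∈ e → x ∈ A2)
    (ht3e : ∀ e ∈ t3, ∀ x : V, x ∈ e → x ∈ A3)
    (ht1c : ∀ x ∈ A1, ∀ y ∈ A1, (spanGraph t1).Reachable x y)
    (ht2c : ∀ x ∈ A2, ∀ y ∈ A2, (spanGraph t2).Reachable x y)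
    (ht3c : ∀ x ∈ A3, ∀ y ∈ A3, (spanGraph t3).Reachable x y)
    (hS : IsSpanningTree G (t1 ∪ t2 ∪ t3 ∪ {s(v1, v2), s(v2, v3)}))
    (hS' : IsSpanningTree G (t1 ∪ t2 ∪ t3 ∪ {s(v1, v3), s(v2, v3)}))
    (hextra : ∃ e ∈ G.edgeSet, e ≠ s(v1, v2) ∧ ∃ x ∈ A1, ∃ y ∈ A2, e = s(x, y))
    (honly : ∀ e ∈ G.edgeSet, (∃ x ∈ A1, ∃ y ∈ A3, e = s(x, y)) → e = s(v1, v3)) :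
    mstProb G (t1 ∪ t2 ∪ t3 ∪ {s(v1, v2), s(v2, v3)}) >
      mstProb G (t1 ∪ t2 ∪ t3 ∪ {s(v1, v3), s(v2, v3)}) := by
  set t : Finset (Sym2 V) := t1 ∪ t2 ∪ t3 with ht
  -- membership facts
  have n12 : ∀ x, x ∈ A1 → x ∉ A2 := fun x h h' => Set.disjoint_left.1 hd12 h h'
  have n13 : ∀ x, x ∈ A1 → x ∉ A3 := fun x h h' => Set.disjoint_left.1 hd13 h h'
  have n23 : ∀ x, x ∈ A2 → x ∉ A3 := fun x h h' => Set.disjoint_left.1 hd23 h h'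
  have hcov' : ∀ x, x ∈ A1 ∨ x ∈ A2 ∨ x ∈ A3 := by
    intro x
    have : x ∈ A1 ∪ A2 ∪ A3 := by rw [hcov]; trivial
    rcases this with (h | h) | h
    · exact Or.inl h
    · exact Or.inr (Or.inl h)
    · exact Or.inr (Or.inr h)
  have htt : ∀ x y, s(x, y) ∈ t → (x ∈ A1 ∧ y ∈ A1) ∨ (x ∈ A2 ∧ y ∈ A2) ∨
      (x ∈ A3 ∧ y ∈ A3) := by
    intro x y h
    rw [ht, Finset.mem_union, Finset.mem_union] at h
    rcases h with (h | h) | h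
    · exact Or.inl ⟨ht1e _ h x (by simp), ht1e _ h y (by simp)⟩
    · exact Or.inr (Or.inl ⟨ht2e _ h x (by simp), ht2e _ h y (by simp)⟩)
    · exact Or.inr (Or.inr ⟨ht3e _ h x (by simp), ht3e _ h y (by simp)⟩)
  have c1 : ∀ {X : Finset (Sym2 V)}, t ⊆ X → ∀ x ∈ A1, ∀ y ∈ A1,
      (spanGraph X).Reachable x y := fun hX x hx y hy =>
    reach_mono (fun e he => hX (by simp [ht, he])) (ht1c x hx y hy)
  have c2 : ∀ {X : Finset (Sym2 V)}, t ⊆ X → ∀ x ∈ A2, ∀ y ∈ A2,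
      (spanGraph X).Reachable x y := fun hX x hx y hy =>
    reach_mono (fun e he => hX (by simp [ht, he])) (ht2c x hx y hy)
  have c3 : ∀ {X : Finset (Sym2 V)}, t ⊆ X → ∀ x ∈ A3, ∀ y ∈ A3,
      (spanGraph X).Reachable x y := fun hX x hx y hy =>
    reach_mono (fun e he => hX (by simp [ht, he])) (ht3c x hx y hy)
  have hcross12 : ∀ x y, x ∈ A1 → y ∈ A2 → s(x, y) ∉ t := by
    intro x y hx hy h
    have := htt x y h
    have := n12 x; have := n12 y; have := n13 x; have := n23 y
    tauto
  have hcross13 : ∀ x y, x ∈ A1 → y ∈ A3 → s(x, y) ∉ t := by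
    intro x y hx hy h
    have := htt x y h
    have := n12 x; have := n13 y; have := n13 x; have := n23 y
    tauto
  have hcross23 : ∀ x y, x ∈ A2 → y ∈ A3 → s(x, y) ∉ t := by
    intro x y hx hy h
    have := htt x y h
    have := n12 x; have := n13 y; have := n23 x; have := n23 y
    tauto
  have hat : s(v1, v2) ∉ t := hcross12 _ _ hv1 hv2
  have hbt : s(v2, v3) ∉ t := hcross23 _ _ hv2 hv3
  have hct : s(v1, v3) ∉ t := hcross13 _ _ hv1 hv3
  have d12 : v1 ≠ v2 := h12.ne
  have d13 : v1 ≠ v3 := h13.ne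
  have d23 : v2 ≠ v3 := h23.ne
  have hab : s(v1, v2) ≠ s(v2, v3) := by
    intro h; rcases Sym2.eq_iff.1 h with ⟨h, h'⟩ | ⟨h, h'⟩ <;> contradiction
  have hac : s(v1, v2) ≠ s(v1, v3) := by
    intro h; rcases Sym2.eq_iff.1 h with ⟨h, h'⟩ | ⟨h, h'⟩ <;> contradiction
  have hcb : s(v1, v3) ≠ s(v2, v3) := by
    intro h; rcases Sym2.eq_iff.1 h with ⟨h, h'⟩ | ⟨h, h'⟩ <;> contradiction
  have ha : s(v1, v2) ∈ G.edgeSet := h12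
  have hb : s(v2, v3) ∈ G.edgeSet := h23
  have hc : s(v1, v3) ∈ G.edgeSet := h13
  have htG : ∀ e ∈ t, e ∈ G.edgeSet := fun e he => hS.1 (by simp [he])
  -- an edge crossing out of `A3`
  have hout3 : ∀ f, f ≠ s(v1, v3) →
      (spanGraph (t ∪ {s(v1, v2), f})).Connected →
      f ∈ G.edgeSet → ∃ x ∈ A2, ∃ y ∈ A3, f = s(x, y) := by
    intro f hfc hconn hfG
    obtain ⟨y, x, hyx, hy, hx⟩ := exists_crossing (hconn.preconnected v3 v1) A3 hv3 (n13 _ hv1)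
    simp only [Finset.mem_union, Finset.mem_insert, Finset.mem_singleton] at hyx
    rcases hyx with h | h | h
    · exfalso
      have := htt y x h
      have := n13 y; have := n23 y
      tauto
    · exfalso
      rcases Sym2.eq_iff.1 h with ⟨rfl, rfl⟩ | ⟨rfl, rfl⟩
      · exact n13 _ hv1 hy
      · exact n23 _ hv2 hy
    · rcases hcov' x with h1 | h1 | h1
      · exfalso
        exact hfc (honly f hfG ⟨x, h1, y, hy, by rw [← h, Sym2.eq_swap]⟩)
      · exact ⟨x, h1, y, hy, by rw [← h, Sym2.eq_swap]⟩
      · exact absurd h1 hx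
  obtain ⟨f0, hf0G, hf0a, x0, hx0, y0, hy0, hf0⟩ := hextra
  have hf0t : f0 ∉ t := by rw [hf0]; exact hcross12 _ _ hx0 hy0
  have hf0b : f0 ≠ s(v2, v3) := by
    rw [hf0]; intro h
    rcases Sym2.eq_iff.1 h with ⟨rfl, rfl⟩ | ⟨rfl, rfl⟩
    · exact n12 _ hx0 hv2
    · exact n13 _ hx0 hv3
  have hf0c : f0 ≠ s(v1, v3) := by
    rw [hf0]; intro h
    rcases Sym2.eq_iff.1 h with ⟨rfl, rfl⟩ | ⟨rfl, rfl⟩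
    · exact n23 _ hy0 hv3
    · exact n13 _ hx0 hv3
  -- name the three edges
  have eS : ∀ f, insert f ((t ∪ {s(v1, v2), s(v2, v3)}).erase s(v2, v3)) =
      t ∪ {s(v1, v2), f} := by
    intro f; exact swap_snd t _ _ f hbt hab
  have eS' : ∀ f, insert f ((t ∪ {s(v1, v3), s(v2, v3)}).erase s(v2, v3)) =
      t ∪ {s(v1, v3), f} := by
    intro f; exact swap_snd t _ _ f hbt hcb
  have eSa : ∀ f, insert f ((t ∪ {s(v1, v2), s(v2, v3)}).erase s(v1, v2)) =
      t ∪ {f, s(v2, v3)} := by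
    intro f; exact swap_fst t _ _ f hat hab
  have eSc : ∀ f, insert f ((t ∪ {s(v1, v3), s(v2, v3)}).erase s(v1, v3)) =
      t ∪ {f, s(v2, v3)} := by
    intro f; exact swap_fst t _ _ f hct hcb
  have pairswap : ∀ e f : Sym2 V, t ∪ {e, f} = t ∪ {f, e} := by
    intro e f; rw [Finset.pair_comm]
  have cardpair : ∀ (X : Finset (Sym2 V)) (e f : Sym2 V), e ∉ X → f ∉ X → e ≠ f →
      (X ∪ {e, f}).card = X.card + 2 := by
    intro X e f he hf hef
    rw [Finset.card_union_of_disjoint, Finset.card_pair hef]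
    rw [Finset.disjoint_right]
    intro g hg
    simp only [Finset.mem_insert, Finset.mem_singleton] at hg
    rcases hg with rfl | rfl <;> assumption
  have subpair : ∀ (e f : Sym2 V), e ∈ G.edgeSet → f ∈ G.edgeSet →
      ((t ∪ {e, f} : Finset (Sym2 V)) : Set (Sym2 V)) ⊆ G.edgeSet := by
    intro e f he hf g hg
    simp only [Finset.coe_union, Set.mem_union, Finset.mem_coe, Finset.mem_insert,
      Finset.mem_singleton] at hg
    rcases hg with hg | rfl | rfl
    · exact htG g hg
    · exact he
    · exact hf
  -- replacing `e23` in `S'` by an edge reconnecting `v2`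
  have mkS' : ∀ f, f ∈ G.edgeSet → f ∉ t → f ≠ s(v1, v3) →
      (spanGraph (t ∪ {s(v1, v3), f})).Reachable v2 v3 →
      IsSpanningTree G (t ∪ {s(v1, v3), f}) := by
    intro f hfG hft hfc hr
    refine isST_of_edges hS' (subpair _ _ hc hfG) ?_ ?_
    · rw [cardpair t _ _ hct hft hfc.symm, cardpair t _ _ hct hbt hcb]
    · intro x y hxy
      simp only [Finset.mem_union, Finset.mem_insert, Finset.mem_singleton] at hxy
      rcases hxy with h | h | h
      · exact reach_of_mem (by simp [h])
      · exact reach_of_mem (by simp [h])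
      · rcases Sym2.eq_iff.1 h with ⟨rfl, rfl⟩ | ⟨rfl, rfl⟩
        · exact hr
        · exact hr.symm
  -- the permutation
  set σ : Equiv.Perm G.edgeSet := Equiv.swap ⟨s(v1, v2), ha⟩ ⟨s(v1, v3), hc⟩ with hσ
  have wa : ∀ w : G.edgeSet → ℝ, ext0 G (fun e => w (σ e)) s(v1, v2) = ext0 G w s(v1, v3) := by
    intro w
    rw [ext0_of_mem _ ha, ext0_of_mem _ hc, hσ, Equiv.swap_apply_left]
  have wc : ∀ w : G.edgeSet → ℝ, ext0 G (fun e => w (σ e)) s(v1, v3) = ext0 G w s(v1, v2) := by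
    intro w
    rw [ext0_of_mem _ ha, ext0_of_mem _ hc, hσ, Equiv.swap_apply_right]
  have wo : ∀ (w : G.edgeSet → ℝ) (e : Sym2 V), e ≠ s(v1, v2) → e ≠ s(v1, v3) →
      ext0 G (fun e => w (σ e)) e = ext0 G w e := by
    intro w e h1 h2
    by_cases he : e ∈ G.edgeSet
    · rw [ext0_of_mem _ he, ext0_of_mem _ he, hσ, Equiv.swap_apply_of_ne_of_ne]
      · intro h; exact h1 (Subtype.ext_iff.1 h)
      · intro h; exact h2 (Subtype.ext_iff.1 h)
    · simp [ext0, he]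
  let lo : G.edgeSet → ℝ := fun e =>
    if (e : Sym2 V) ∈ t then 0 else if (e : Sym2 V) = s(v1, v3) then 2 / 10 else
      if (e : Sym2 V) = f0 then 4 / 10 else if (e : Sym2 V) = s(v2, v3) then 6 / 10 else 8 / 10
  refine measure_lt σ _ _ lo ?_ ?_ ?_ ?_
  · intro e; simp only [lo]; split_ifs <;> norm_num
  · intro e; simp only [lo]; split_ifs <;> norm_num
  · intro w hw
    refine mst_of_local _ hS ?_
    intro e he f hf hST
    have hfG : f ∈ G.edgeSet := hST.1 (by simp)
    have hfa : f ≠ s(v1, v2) := by rintro rfl; exact hf (by simp)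
    have hfb : f ≠ s(v2, v3) := by rintro rfl; exact hf (by simp)
    have hft : f ∉ t := fun h => hf (by simp [h])
    have heC : e ∈ t ∨ e = s(v1, v2) ∨ e = s(v2, v3) := by
        simpa only [Finset.mem_union, Finset.mem_insert, Finset.mem_singleton] using he
    rcases heC with het | rfl | rfl
    · have hea : e ≠ s(v1, v2) := by rintro rfl; exact hat het
      have heb : e ≠ s(v2, v3) := by rintro rfl; exact hbt het
      have hec : e ≠ s(v1, v3) := by rintro rfl; exact hct het
      by_cases hfc : f = s(v1, v3)
      · exfalso
        subst hfc
        refine hS.not_conn_of_card_lt (T := (t ∪ {s(v1, v2), s(v2, v3)}).erase e) ?_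
          (Finset.card_erase_lt_of_mem he) ?_
        · intro g hg
          exact hS.1 (Finset.mem_of_mem_erase (Finset.mem_coe.1 hg))
        · refine conn_of_edges hST.2.1 ?_
          intro x y hxy
          have hr : (spanGraph ((t ∪ {s(v1, v2), s(v2, v3)}).erase e)).Reachable v1 v3 :=
            (reach_of_mem (b := v2) (by simp [hea.symm])).trans
              (reach_of_mem (by simp [heb.symm]))
          rcases Finset.mem_insert.1 hxy with h | h
          · rcases Sym2.eq_iff.1 h with ⟨rfl, rfl⟩ | ⟨rfl, rfl⟩
            · exact hr
            · exact hr.symm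
          · exact reach_of_mem h
      · rw [wo w e hea hec, wo w f hfa hfc]
        refine local_of_mst hw (by simp [het]) (by simp [hft, hfc, hfb]) ?_
        refine isST_of_edges hST ?_ ?_ ?_
        · intro g hg
          rcases Finset.mem_insert.1 (Finset.mem_coe.1 hg) with rfl | h
          · exact hfG
          · exact hS'.1 (Finset.mem_of_mem_erase h)
        · rw [Finset.card_insert_of_notMem (by simp [hft, hfc, hfb]),
            Finset.card_insert_of_notMem (by simp [hft, hfa, hfb]),
            Finset.card_erase_of_mem (by simp [het]), Finset.card_erase_of_mem (by simp [het]),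
            cardpair t _ _ hct hbt hcb, cardpair t _ _ hat hbt hab]
        · intro x y hxy
          have hr : (spanGraph (insert f ((t ∪ {s(v1, v3), s(v2, v3)}).erase e))).Reachable
              v1 v2 :=
            (reach_of_mem (b := v3) (by simp [hec.symm])).trans
              (reach_of_mem (a := v2) (b := v3) (by simp [heb.symm])).symm
          by_cases h : s(x, y) = s(v1, v2)
          · rcases Sym2.eq_iff.1 h with ⟨rfl, rfl⟩ | ⟨rfl, rfl⟩
            · exact hr
            · exact hr.symm
          · apply reach_of_mem
            simp only [Finset.mem_insert, Finset.mem_erase, Finset.mem_union,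
              Finset.mem_singleton] at hxy ⊢
            tauto
    · -- e = e12
      rw [wa]
      rw [eSa] at hST
      by_cases hfc : f = s(v1, v3)
      · subst hfc
        rw [wc]
        refine local_of_mst hw (by simp) (by simp [hat, hac, hab]) ?_
        rw [eSc]; exact hS
      · rw [wo w f hfa hfc]
        refine local_of_mst hw (by simp) (by simp [hft, hfc, hfb]) ?_
        rw [eSc]; exact hST
    · -- e = e23
      rw [wo w _ hab.symm hcb.symm]
      rw [eS] at hST
      by_cases hfc : f = s(v1, v3)
      · subst hfc
        rw [wc]
        refine local_of_mst hw (by simp) (by simp [hat, hac, hab]) ?_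
        rw [eS', pairswap]; exact hST
      · rw [wo w f hfa hfc]
        refine local_of_mst hw (by simp) (by simp [hft, hfc, hfb]) ?_
        rw [eS']
        obtain ⟨x, hx, y, hy, hxy⟩ := hout3 f hfc hST.2.1 hfG
        refine mkS' f hfG hft hfc ?_
        have hX : t ⊆ t ∪ {s(v1, v3), f} := Finset.subset_union_left
        exact (c2 hX _ hv2 _ hx).trans
          ((reach_of_mem (by simp [hxy])).trans (c3 hX _ hy _ hv3))
  · intro w hw
    have w1 : ∀ e ∈ t, ext0 G w e < 1 / 10 := by
      intro e he
      rw [ext0_of_mem _ (htG e he)]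
      have := (hw ⟨e, htG e he⟩).2
      simp only [lo, he, if_true] at this
      linarith
    have w2 : 2 / 10 < ext0 G w s(v1, v3) ∧ ext0 G w s(v1, v3) < 3 / 10 := by
      rw [ext0_of_mem _ hc]
      have := hw ⟨_, hc⟩
      simp only [lo, hct, if_true, if_false] at this
      constructor <;> linarith
    have w3 : 4 / 10 < ext0 G w f0 ∧ ext0 G w f0 < 5 / 10 := by
      rw [ext0_of_mem _ hf0G]
      have := hw ⟨_, hf0G⟩
      simp only [lo, hf0t, hf0c, if_true, if_false] at this
      constructor <;> linarith
    have w4 : 6 / 10 < ext0 G w s(v2, v3) ∧ ext0 G w s(v2, v3) < 7 / 10 := by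
      rw [ext0_of_mem _ hb]
      have := hw ⟨_, hb⟩
      simp only [lo, hbt, hcb.symm, hf0b.symm, if_true, if_false] at this
      constructor <;> linarith
    have w5 : ∀ e ∈ G.edgeSet, e ∉ t → e ≠ s(v1, v3) → e ≠ f0 → e ≠ s(v2, v3) →
        8 / 10 < ext0 G w e := by
      intro e he h1 h2 h3 h4
      rw [ext0_of_mem _ he]
      have := (hw ⟨_, he⟩).1
      simp only [lo, h1, h2, h3, h4, if_false] at this
      linarith
    constructor
    · refine mst_of_local _ hS ?_
      intro e he f hf hST
      have hfG : f ∈ G.edgeSet := hST.1 (by simp)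
      have hfa : f ≠ s(v1, v2) := by rintro rfl; exact hf (by simp)
      have hfb : f ≠ s(v2, v3) := by rintro rfl; exact hf (by simp)
      have hft : f ∉ t := fun h => hf (by simp [h])
      have heC : e ∈ t ∨ e = s(v1, v2) ∨ e = s(v2, v3) := by
        simpa only [Finset.mem_union, Finset.mem_insert, Finset.mem_singleton] using he
      have hfw : 8 / 10 < ext0 G (fun e => w (σ e)) f ∨
          (f = f0 ∧ 4 / 10 < ext0 G (fun e => w (σ e)) f) := by
        by_cases hfc : f = s(v1, v3)
        · subst hfc
          left
          rw [wc]
          exact w5 _ ha hat hac (Ne.symm hf0a) hab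
        · rw [wo w f hfa hfc]
          by_cases hff : f = f0
          · right; rw [hff]; exact ⟨rfl, w3.1⟩
          · left; exact w5 f hfG hft hfc hff hfb
      have hfw' : 4 / 10 < ext0 G (fun e => w (σ e)) f := by
        rcases hfw with h | h
        · linarith
        · exact h.2
      rcases heC with het | rfl | rfl
      · have hea : e ≠ s(v1, v2) := by rintro rfl; exact hat het
        have hec : e ≠ s(v1, v3) := by rintro rfl; exact hct het
        rw [wo w e hea hec]
        have := w1 e het
        linarith
      · rw [wa]; linarith [w2.2]
      · rw [wo w _ hab.symm hcb.symm]
        rcases hfw with h | ⟨rfl, -⟩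
        · linarith [w4.2]
        · exfalso
          rw [eS] at hST
          obtain ⟨x, hx, y, hy, hxy⟩ := hout3 f hf0c hST.2.1 hfG
          rw [hf0] at hxy
          rcases Sym2.eq_iff.1 hxy with ⟨rfl, rfl⟩ | ⟨rfl, rfl⟩
          · exact n12 _ hx0 hx
          · exact n13 _ hx0 hy
    · intro hmst
      have hlt : ext0 G w s(v2, v3) < ext0 G w f0 := by
        refine local_of_mst hmst (by simp) (by simp [hf0t, hf0c, hf0b]) ?_
        rw [eS']
        refine mkS' f0 hf0G hf0t hf0c ?_
        have hX : t ⊆ t ∪ {s(v1, v3), f0} := Finset.subset_union_left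
        exact (c2 hX _ hv2 _ hy0).trans
          ((reach_of_mem (a := x0) (b := y0) (by simp [hf0])).symm.trans
            ((c1 hX _ hx0 _ hv1).trans (reach_of_mem (by simp))))
      linarith [w3.2, w4.1]

end RST
end
end

section
/- Let G be a finite connected simple graph, let T_1 and T_2 be spanning trees of G with cycle relations R_1 and R_2, and suppose β : E(G) → E(G) is a bijection that is cycle-expanding from T_1 to T_2, i.e., β(E(T_1)) = E(T_2) and for all edges e ∈ T_1 and e' ∉ T_1, e R_1 e' implies β(e) R_2 β(e'). Then P_MST(T_1;G) ≥ P_MST(T_2;G). Moreover, if β is strictly cycle-expanding, i.e., additionally there exist e ∈ T_2, e' ∉ T_2 with e R_2 e' but β^{−1}(e) R_1 β^{−1}(e') failing, then P_MST(T_1;G) > P_MST(T_2;G). -/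
open MeasureTheory SimpleGraph
open scoped Classical

noncomputable section

namespace RST

variable {V : Type*}

/-- The cycle relation `R_T`: `e R_T e'` iff `e` is an edge of the tree `T`, `e'` is an
edge of `G` not in `T`, and `e` lies on the unique path in `T` between the two
endpoints of `e'`. -/
def CycleRel (G : SimpleGraph V) (T : Finset (Sym2 V)) (e e' : Sym2 V) : Prop :=
  e ∈ T ∧ e' ∈ G.edgeSet ∧ e' ∉ T ∧
    ∀ (u v : V) (p : (spanGraph T).Walk u v), p.IsPath → e' = s(u, v) → e ∈ p.edges

lemma spanGraph_edgeSet_aux {G : SimpleGraph V} {T : Finset (Sym2 V)} (h : ↑T ⊆ G.edgeSet) :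
    (spanGraph T).edgeSet = ↑T := by
  rw [spanGraph, edgeSet_fromEdgeSet]
  ext e
  simp only [Set.mem_sdiff, Finset.mem_coe]
  constructor
  · exact fun h => h.1
  · intro he
    exact ⟨he, G.not_isDiag_of_mem_edgeSet (h he)⟩

lemma IsSpanningTree.card_eq [Fintype V] {G : SimpleGraph V} {T : Finset (Sym2 V)}
    (h : IsSpanningTree G T) : T.card + 1 = Nat.card V := by
  have := (isTree_iff_connected_and_card.1 (IsTree.mk h.2.1 h.2.2)).2
  rw [spanGraph_edgeSet_aux h.1] at this
  simpa using this

/-- Swapping along a fundamental cycle yields a spanning tree. -/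
lemma swap_spanning [Fintype V] {G : SimpleGraph V} {T : Finset (Sym2 V)}
    (h : IsSpanningTree G T) {e e' : Sym2 V} (hR : CycleRel G T e e') :
    IsSpanningTree G (insert e' (T.erase e)) := by
  obtain ⟨heT, heG, heT', hp⟩ := hR
  have hsub : (↑(insert e' (T.erase e)) : Set (Sym2 V)) ⊆ G.edgeSet := by
    intro x hx
    simp only [Finset.coe_insert, Finset.coe_erase, Set.mem_insert_iff, Set.mem_sdiff] at hx
    rcases hx with rfl | hx
    · exact heG
    · exact h.1 hx.1
  have hsub2 : (↑(insert e' T) : Set (Sym2 V)) ⊆ G.edgeSet := by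
    intro x hx
    simp only [Finset.coe_insert, Set.mem_insert_iff] at hx
    rcases hx with rfl | hx
    · exact heG
    · exact h.1 hx
  have hne : e ≠ e' := fun hh => heT' (hh ▸ heT)
  have hle : spanGraph T ≤ spanGraph (insert e' T) := by
    apply fromEdgeSet_mono
    simp
  have hconn : (spanGraph (insert e' T)).Connected := h.2.1.mono hle
  have hdel : (spanGraph (insert e' T)).deleteEdges {e} = spanGraph (insert e' (T.erase e)) := by
    rw [← edgeSet_inj, edgeSet_deleteEdges, spanGraph_edgeSet_aux hsub, spanGraph_edgeSet_aux hsub2]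
    ext x
    simp only [Finset.coe_insert, Finset.coe_erase, Set.mem_insert_iff, Set.mem_sdiff,
      Set.mem_singleton_iff]
    grind
  have hnb : ¬ (spanGraph (insert e' T)).IsBridge e := by
    intro hb
    induction e' with | _ u v =>
    obtain ⟨p, hpp⟩ := h.2.1.exists_isPath u v
    have hmem := hp u v p hpp rfl
    have hadj : (spanGraph (insert s(u, v) T)).Adj v u := by
      rw [← mem_edgeSet, spanGraph_edgeSet_aux hsub2]
      simp [Sym2.eq_swap]
    have hcyc : (Walk.cons hadj (p.mapLe hle)).IsCycle := by
      rw [Walk.cons_isCycle_iff]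
      refine ⟨hpp.mapLe hle, ?_⟩
      rw [Walk.edges_mapLe_eq_edges]
      intro hx
      have := p.edges_subset_edgeSet hx
      rw [spanGraph_edgeSet_aux h.1, Sym2.eq_swap] at this
      exact heT' this
    refine hb.notMem_edges_of_isCycle hcyc ?_
    rw [Walk.edges_cons, Walk.edges_mapLe_eq_edges]
    exact List.mem_cons_of_mem _ hmem
  have hconn' : (spanGraph (insert e' (T.erase e))).Connected := by
    rw [← hdel]
    induction e with | _ a b =>
    exact hconn.connected_delete_edge_of_not_isBridge hnb
  refine ⟨hsub, hconn', ?_⟩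
  refine (isTree_iff_connected_and_card.2 ⟨hconn', ?_⟩).2
  rw [spanGraph_edgeSet_aux hsub, ← h.card_eq]
  have : (insert e' (T.erase e)).card = T.card := by
    rw [Finset.card_insert_of_notMem (by simp [heT']), Finset.card_erase_add_one heT]
  rw [Nat.card_coe_set_eq, Set.ncard_coe_finset, this]

lemma treeWeight_swap [Fintype V] {G : SimpleGraph V} {T : Finset (Sym2 V)}
    (w : G.edgeSet → ℝ) (e e' : G.edgeSet) (he : (e : Sym2 V) ∈ T) (he' : (e' : Sym2 V) ∉ T) :
    treeWeight G w (insert (e' : Sym2 V) (T.erase e)) = treeWeight G w T - w e + w e' := by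
  have hne : e ≠ e' := fun hh => he' (hh ▸ he)
  have key : ∀ x : G.edgeSet,
      (if (x : Sym2 V) ∈ insert (e' : Sym2 V) (T.erase e) then w x else 0) =
      (if (x : Sym2 V) ∈ T then w x else 0) - (if x = e then w x else 0)
        + (if x = e' then w x else 0) := by
    intro x
    by_cases h1 : x = e
    · subst h1; simp [he, hne, Subtype.coe_injective.eq_iff]
    · by_cases h2 : x = e'
      · subst h2; simp [he', h1]
      · simp [h1, h2, Subtype.coe_injective.eq_iff]
  unfold treeWeight
  simp_rw [key]
  rw [Finset.sum_add_distrib, Finset.sum_sub_distrib]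
  simp

/-- The exchange step. -/
lemma exchange_s7 [Fintype V] {G : SimpleGraph V} {T T' : Finset (Sym2 V)}
    (h : IsSpanningTree G T) (h' : IsSpanningTree G T') {e' : Sym2 V} (he' : e' ∈ T')
    (heT : e' ∉ T) : ∃ e, e ∉ T' ∧ CycleRel G T e e' ∧ CycleRel G T' e' e := by
  induction e' with | _ u v =>
  obtain ⟨p, hpp⟩ := h.2.1.exists_isPath u v
  have hb : (spanGraph T').IsBridge s(u, v) := by
    refine isAcyclic_iff_forall_isBridge.1 h'.2.2 ?_
    rw [spanGraph_edgeSet_aux h'.1]; exact he'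
  rw [isBridge_iff] at hb
  obtain ⟨d, hd, hd1, hd2⟩ := p.exists_boundary_dart
    {x | ((spanGraph T').deleteEdges {s(u, v)}).Reachable u x} (Reachable.refl u) hb
  simp only [Set.mem_ofPred_eq] at hd1 hd2
  have hnr : ¬ ((spanGraph T').deleteEdges {s(u, v)}).Reachable d.fst d.snd :=
    fun hr => hd2 (hd1.trans hr)
  have hdp : d.edge ∈ p.edges := List.mem_map_of_mem hd
  have hdT : d.edge ∈ T := by
    have := p.edges_subset_edgeSet hdp
    rwa [spanGraph_edgeSet_aux h.1] at this
  have hdne : d.edge ≠ s(u, v) := fun hh => heT (hh ▸ hdT)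
  have hdT' : d.edge ∉ T' := by
    intro hm
    apply hnr
    apply Adj.reachable
    rw [← mem_edgeSet, edgeSet_deleteEdges, spanGraph_edgeSet_aux h'.1]
    exact ⟨hm, hdne⟩
  refine ⟨d.edge, hdT', ⟨hdT, h'.1 he', heT, ?_⟩, ⟨he', h.1 hdT, hdT', ?_⟩⟩
  · intro a b q hq hab
    rw [Sym2.eq_iff] at hab
    rcases hab with ⟨rfl, rfl⟩ | ⟨rfl, rfl⟩
    · have := h.2.2.path_unique ⟨p, hpp⟩ ⟨q, hq⟩
      rw [Subtype.mk.injEq] at this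
      rwa [← this]
    · have := h.2.2.path_unique ⟨p, hpp⟩ ⟨q.reverse, hq.reverse⟩
      rw [Subtype.mk.injEq] at this
      rw [this] at hdp
      simpa using hdp
  · intro a b q hq hab
    have hab : s(d.fst, d.snd) = s(a, b) := hab
    by_contra hcon
    have hr : ((spanGraph T').deleteEdges {s(u, v)}).Reachable a b :=
      reachable_deleteEdges_iff_exists_walk.2 ⟨q, hcon⟩
    rw [Sym2.eq_iff] at hab
    rcases hab with ⟨h1, h2⟩ | ⟨h1, h2⟩
    · rw [h1, h2] at hnr; exact hnr hr
    · rw [h1, h2] at hnr; exact hnr hr.symm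

lemma le_of_cycleRel [Fintype V] {G : SimpleGraph V} {T : Finset (Sym2 V)}
    (h : IsSpanningTree G T) (w : G.edgeSet → ℝ)
    (hw : ∀ e e' : G.edgeSet, CycleRel G T e e' → w e < w e') (n : ℕ) :
    ∀ T' : Finset (Sym2 V), IsSpanningTree G T' → (T' \ T).card = n →
      treeWeight G w T ≤ treeWeight G w T' ∧
        (T' ≠ T → treeWeight G w T < treeWeight G w T') := by
  induction n with
  | zero =>
    intro T' h' hc
    have hsub : T' ⊆ T := by
      rwa [Finset.card_eq_zero, Finset.sdiff_eq_empty_iff_subset] at hc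
    have : T' = T := Finset.eq_of_subset_of_card_le hsub (by
      have := h.card_eq; have := h'.card_eq; omega)
    subst this
    simp
  | succ n ih =>
    intro T' h' hc
    obtain ⟨e', he'⟩ := Finset.card_pos.1 (by omega : 0 < (T' \ T).card)
    have hmem := he'
    rw [Finset.mem_sdiff] at he'
    obtain ⟨e, he, hR, hR'⟩ := exchange_s7 h h' he'.1 he'.2
    have hsw := swap_spanning h' hR'
    have hcard : (insert e (T'.erase e') \ T).card = n := by
      have : insert e (T'.erase e') \ T = (T' \ T).erase e' := by
        ext x
        have := hR.1
        simp only [Finset.mem_sdiff, Finset.mem_insert, Finset.mem_erase]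
        grind
      rw [this, Finset.card_erase_of_mem hmem, hc]
      rfl
    have h1 := (ih _ hsw hcard).1
    have h2 := treeWeight_swap (T := T') w ⟨e', h'.1 he'.1⟩ ⟨e, h.1 hR.1⟩ he'.1 he
    have h3 := hw ⟨e, h.1 hR.1⟩ ⟨e', h'.1 he'.1⟩ hR
    simp only at h2
    rw [h2] at h1
    have : treeWeight G w T < treeWeight G w T' := by linarith
    exact ⟨this.le, fun _ => this⟩

lemma mem_mstEvent_iff [Fintype V] {G : SimpleGraph V} {T : Finset (Sym2 V)}
    (h : IsSpanningTree G T) (w : G.edgeSet → ℝ) :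
    w ∈ mstEvent G T ↔ ∀ e e' : G.edgeSet, CycleRel G T e e' → w e < w e' := by
  constructor
  · rintro ⟨_, hw⟩ e e' hR
    have h1 := hw _ (swap_spanning h hR) (by
      intro hh
      apply hR.2.2.1
      rw [← hh]; simp)
    rw [treeWeight_swap w e e' hR.1 hR.2.2.1] at h1
    linarith
  · intro hw
    exact ⟨h, fun T' h' hne => (le_of_cycleRel h w hw _ T' h' rfl).2 hne⟩

lemma edgeUniform_preimage {E : Type*} [Fintype E] (σ : E ≃ E) (S : Set (E → ℝ)) :
    edgeUniform E {w | (fun x => w (σ x)) ∈ S} = edgeUniform E S := by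
  have hm := measurePreserving_piCongrLeft (α := fun _ : E => ℝ)
    (fun _ : E => (volume : Measure ℝ).restrict (Set.Icc (0 : ℝ) 1)) σ.symm
  have := hm.measure_preimage_equiv (f := MeasurableEquiv.piCongrLeft (fun _ : E => ℝ) σ.symm) S
  unfold edgeUniform
  rw [← this]
  congr 1
  ext w
  simp only [Set.mem_ofPred_eq, Set.mem_preimage]
  have : (MeasurableEquiv.piCongrLeft (fun _ : E => ℝ) σ.symm) w = fun x => w (σ x) := by
    funext x
    obtain ⟨y, rfl⟩ := σ.symm.surjective x
    simp [MeasurableEquiv.coe_piCongrLeft, Equiv.piCongrLeft_apply_apply]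
  rw [this]

instance {E : Type*} [Fintype E] : IsProbabilityMeasure (edgeUniform E) := by
  have : IsProbabilityMeasure ((volume : Measure ℝ).restrict (Set.Icc (0 : ℝ) 1)) :=
    ⟨by simp⟩
  unfold edgeUniform
  infer_instance

lemma edgeUniform_box_pos {E : Type*} [Fintype E] (a b : E → ℝ) (ha : ∀ x, 0 ≤ a x)
    (hab : ∀ x, a x < b x) (hb : ∀ x, b x ≤ 1) :
    0 < edgeUniform E (Set.univ.pi fun x => Set.Ioo (a x) (b x)) := by
  unfold edgeUniform
  rw [Measure.pi_pi, pos_iff_ne_zero, Finset.prod_ne_zero_iff]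
  intro x _
  rw [Measure.restrict_apply measurableSet_Ioo, Set.inter_eq_left.2]
  · simpa using hab x
  · intro y hy
    exact ⟨(ha x).trans hy.1.le, hy.2.le.trans (hb x)⟩

/-- Cycle expansion inequality: if `β` is a bijection of `E(G)` carrying `T1` to `T2`
with `e R_{T1} e' → β e R_{T2} β e'`, then `P_MST(T1) ≥ P_MST(T2)`; and if moreover the
inclusion of relations is strict, then the inequality is strict. -/
theorem cycle_expansion_inequality [Fintype V] (G : SimpleGraph V) (hG : G.Connected)
    (T1 T2 : Finset (Sym2 V)) (hT1 : IsSpanningTree G T1) (hT2 : IsSpanningTree G T2)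
    (β : Sym2 V → Sym2 V) (hβ : Set.BijOn β G.edgeSet G.edgeSet)
    (hmap : T1.image β = T2)
    (hexp : ∀ e e' : Sym2 V, CycleRel G T1 e e' → CycleRel G T2 (β e) (β e')) :
    mstProb G T1 ≥ mstProb G T2 ∧
    ((∃ e e' : Sym2 V, CycleRel G T2 e e' ∧
        ∃ f f' : Sym2 V, f ∈ G.edgeSet ∧ f' ∈ G.edgeSet ∧ β f = e ∧ β f' = e' ∧
          ¬CycleRel G T1 f f') →
      mstProb G T1 > mstProb G T2) := by
  set σ : G.edgeSet ≃ G.edgeSet := hβ.equiv β with hσ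
  have hσv : ∀ x : G.edgeSet, ((σ x : G.edgeSet) : Sym2 V) = β x := fun x => rfl
  have hsub : mstEvent G T2 ⊆ {w | (fun x => w (σ x)) ∈ mstEvent G T1} := by
    intro w hw
    rw [mem_mstEvent_iff hT2] at hw
    rw [Set.mem_ofPred_eq, mem_mstEvent_iff hT1]
    intro e e' hR
    exact hw _ _ (hexp _ _ hR)
  have hP1 : mstProb G T1 =
      (edgeUniform G.edgeSet {w | (fun x => w (σ x)) ∈ mstEvent G T1}).toReal := by
    rw [edgeUniform_preimage]; rfl
  refine ⟨?_, ?_⟩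
  · rw [hP1]
    exact ENNReal.toReal_mono (measure_ne_top _ _) (measure_mono hsub)
  · rintro ⟨e, e', hR2, f, f', hf, hf', rfl, rfl, hnR⟩
    have hfT : f ∈ T1 := by
      have := hR2.1
      rw [← hmap, Finset.mem_image] at this
      obtain ⟨g, hg, hgf⟩ := this
      rwa [← hβ.injOn (hT1.1 hg) hf hgf]
    have hfT' : f' ∉ T1 := by
      intro hh
      apply hR2.2.2.1
      rw [← hmap]
      exact Finset.mem_image_of_mem β hh
    -- lower ends of the intervals, indexed by the preimage edge
    let c : Sym2 V → ℝ := fun x =>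
      if x = f then 1/2 else if x = f' then 1/4 else if x ∈ T1 then 0 else 3/4
    have hc0 : ∀ x, 0 ≤ c x := by
      intro x; simp only [c]; split_ifs <;> norm_num
    have hc1 : ∀ x, c x + 1/4 ≤ 1 := by
      intro x; simp only [c]; split_ifs <;> norm_num
    let B : Set (G.edgeSet → ℝ) := Set.univ.pi fun x =>
      Set.Ioo (c (σ.symm x)) (c (σ.symm x) + 1/4)
    have hBpos : 0 < edgeUniform G.edgeSet B :=
      edgeUniform_box_pos _ _ (fun x => hc0 _) (fun x => by linarith) (fun x => hc1 _)
    have hBm : MeasurableSet B := MeasurableSet.univ_pi fun x => measurableSet_Ioo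
    have hBσ : ∀ w ∈ B, ∀ x : G.edgeSet, c x < w (σ x) ∧ w (σ x) < c x + 1/4 := by
      intro w hw x
      have := hw (σ x) (Set.mem_univ _)
      simpa using this
    have hBsub : B ⊆ {w | (fun x => w (σ x)) ∈ mstEvent G T1} := by
      intro w hw
      rw [Set.mem_ofPred_eq, mem_mstEvent_iff hT1]
      intro g g' hR
      have h1 := (hBσ w hw g).2
      have h2 := (hBσ w hw g').1
      have hg := hR.1
      have hg' := hR.2.2.1
      have hle : c g + 1/4 ≤ c g' := by
        have hne : (g' : Sym2 V) ≠ f := fun hh => hg' (hh ▸ hfT)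
        have hne' : (g : Sym2 V) ≠ f' := fun hh => hfT' (hh ▸ hg)
        by_cases hgf : (g : Sym2 V) = f
        · have hgf' : (g' : Sym2 V) ≠ f' := by
            intro hh
            rw [hgf, hh] at hR
            exact hnR hR
          simp only [c, if_pos hgf, if_neg hne, if_neg hgf', if_neg hg']
          norm_num
        · simp only [c, if_neg hgf, if_neg hne', if_pos hg, if_neg hne, if_neg hg']
          split_ifs <;> norm_num
      show w (σ g) < w (σ g')
      linarith
    have hdisj : Disjoint (mstEvent G T2) B := by
      rw [Set.disjoint_left]
      intro w hw hB
      rw [mem_mstEvent_iff hT2] at hw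
      have h0 := hw (σ ⟨f, hf⟩) (σ ⟨f', hf'⟩) hR2
      have h1 := (hBσ w hB ⟨f, hf⟩).1
      have h2 := (hBσ w hB ⟨f', hf'⟩).2
      have hne : f' ≠ f := fun hh => hfT' (hh ▸ hfT)
      simp only [c, if_true, if_neg hne] at h1 h2
      linarith
    rw [hP1]
    refine (ENNReal.toReal_lt_toReal (measure_ne_top _ _) (measure_ne_top _ _)).2 ?_
    calc edgeUniform G.edgeSet (mstEvent G T2)
        < edgeUniform G.edgeSet (mstEvent G T2) + edgeUniform G.edgeSet B :=
          ENNReal.lt_add_right (measure_ne_top _ _) hBpos.ne'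
      _ = edgeUniform G.edgeSet (mstEvent G T2 ∪ B) := (measure_union hdisj hBm).symm
      _ ≤ _ := measure_mono (Set.union_subset hsub hBsub)

end RST
end
end
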